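/- arXiv:1801.09089 — 5 statements merged into one kernel-verified Lean document; each statement's English description precedes it below -/
import Mathlib

section
/- For every finite sequence S = ⟨J_1,...,J_n⟩ of two-stage jobs, where J_i = (r_i,t_i) with r_i, t_i ≥ 0, the completion time of S on a single two-stage flowshop equals the completion time of the dual schedule S^d = ⟨J_n^d,...,J_1^d⟩ on the dual jobs, where J_i^d = (t_i,r_i). That is, C(S) = C(S^d). -/
/-- Adding a job `(r, t)` to a flowshop with status `(ρ, τ)` (completion times of the
R-processor and T-processor) yields the status `(ρ + r, max (ρ + r) τ + t)`. -/
def stepFS (s j : ℝ × ℝ) : ℝ × ℝ := (s.1 + j.1, max (s.1 + j.1) s.2 + j.2)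

/-- The status `(ρ, τ)` of a two-stage flowshop after processing a sequence of two-stage
jobs, starting from `(0, 0)`. -/
def statusFS (L : List (ℝ × ℝ)) : ℝ × ℝ := L.foldl stepFS (0, 0)

/-- The completion time of a sequence of two-stage jobs on a single two-stage flowshop. -/
def compFS (L : List (ℝ × ℝ)) : ℝ := (statusFS L).2

/-- The dual job of a two-stage job `(r, t)` is the job `(t, r)`. -/
def dualJob (j : ℝ × ℝ) : ℝ × ℝ := (j.2, j.1)

/-!
Statuses evolve max-plus linearly, and the update by a job is adjoint to the update by its dual job
for the symmetric pairing `combineFS`. Moving the jobs of a sequence one by one across the pairing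
runs the dual jobs in reverse order on the other side. Pairing with the initial status `(0, 0)`
reads off `max ρ τ`, which is `τ` as soon as the last `t` is nonnegative.
-/

/-- The max-plus pairing of two statuses. For nonnegative job times it is the completion time of a
schedule cut between two jobs: `s` is the status after the first part, and `s'` is the status that
the second part reaches when run backwards on its dual jobs. -/
def combineFS (s s' : ℝ × ℝ) : ℝ := max (s.1 + s'.2) (s.2 + s'.1)

theorem combineFS_comm (s s' : ℝ × ℝ) : combineFS s s' = combineFS s' s := by
  simp only [combineFS, max_comm, add_comm]

theorem combineFS_zero_right (s : ℝ × ℝ) : combineFS s (0, 0) = max s.1 s.2 := by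
  simp only [combineFS, add_zero]

theorem combineFS_stepFS_left (s s' j : ℝ × ℝ) :
    combineFS (stepFS s j) s' = combineFS s (stepFS s' (dualJob j)) := by
  obtain ⟨ρ, τ⟩ := s
  obtain ⟨ρ', τ'⟩ := s'
  obtain ⟨r, t⟩ := j
  calc max (ρ + r + τ') (max (ρ + r) τ + t + ρ')
      = max (ρ + r + τ') (max (ρ + r + t + ρ') (τ + t + ρ')) := by
        simp only [max_add_add_right]
    _ = max (max (ρ + (ρ' + t + r)) (ρ + (τ' + r))) (τ + (ρ' + t)) := by
        rw [← max_assoc, max_comm (ρ + r + τ')]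
        ring_nf
    _ = max (ρ + (max (ρ' + t) τ' + r)) (τ + (ρ' + t)) := by
        simp only [max_add_add_left, max_add_add_right]

theorem combineFS_foldl_stepFS_left (L : List (ℝ × ℝ)) (s s' : ℝ × ℝ) :
    combineFS (L.foldl stepFS s) s' =
      combineFS s ((L.map dualJob).reverse.foldl stepFS s') := by
  induction L generalizing s with
  | nil => rfl
  | cons j L ih =>
    rw [List.foldl_cons, ih, combineFS_stepFS_left, List.map_cons, List.reverse_cons,
      List.foldl_concat]

theorem max_statusFS_reverse_map_dualJob (L : List (ℝ × ℝ)) :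
    max (statusFS (L.map dualJob).reverse).1 (statusFS (L.map dualJob).reverse).2 =
      max (statusFS L).1 (statusFS L).2 := by
  rw [← combineFS_zero_right, combineFS_comm, ← combineFS_zero_right]
  exact (combineFS_foldl_stepFS_left L (0, 0) (0, 0)).symm

theorem statusFS_fst_le_compFS {L : List (ℝ × ℝ)} (ht : ∀ j ∈ L.getLast?, 0 ≤ j.2) :
    (statusFS L).1 ≤ compFS L := by
  obtain rfl | ⟨L, j, rfl⟩ := L.eq_nil_or_concat'
  · exact le_rfl
  · have hj : 0 ≤ j.2 := ht j List.getLast?_concat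
    rw [compFS, statusFS, List.foldl_concat]
    exact (le_max_left _ _).trans (le_add_of_nonneg_right hj)

theorem stmt3_general (L : List (ℝ × ℝ)) (hr : ∀ j ∈ L.head?, 0 ≤ j.1)
    (ht : ∀ j ∈ L.getLast?, 0 ≤ j.2) :
    compFS L = compFS ((L.map dualJob).reverse) := by
  have hr' : ∀ j ∈ ((L.map dualJob).reverse).getLast?, 0 ≤ j.2 := by
    simp only [List.getLast?_reverse, List.head?_map, Option.mem_map]
    rintro _ ⟨j, hj, rfl⟩
    exact hr j hj
  calc compFS L
      = max (statusFS L).1 (statusFS L).2 := (max_eq_right (statusFS_fst_le_compFS ht)).symm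
    _ = max (statusFS (L.map dualJob).reverse).1 (statusFS (L.map dualJob).reverse).2 :=
        (max_statusFS_reverse_map_dualJob L).symm
    _ = compFS ((L.map dualJob).reverse) := max_eq_right (statusFS_fst_le_compFS hr')

/-- The completion time of a job sequence on a single two-stage flowshop equals the
completion time of the reversed sequence of dual jobs. -/
theorem stmt3 (L : List (ℝ × ℝ)) (hL : ∀ j ∈ L, 0 ≤ j.1 ∧ 0 ≤ j.2) :
    compFS L = compFS ((L.map dualJob).reverse) :=
  stmt3_general L (fun j hj => (hL j (List.mem_of_head? hj)).1)
    fun j hj => (hL j (List.mem_of_getLast? hj)).2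
end

section
/- Let G = {J_1,...,J_n} be a finite set of two-stage jobs with dual job set G^d. If the sequence S = ⟨J_1,...,J_n⟩ achieves the minimum completion time on a single two-stage flowshop among all orderings of G, then the dual schedule S^d = ⟨J_n^d,...,J_1^d⟩ achieves the minimum completion time among all orderings of G^d. -/
/-!
The completion time of a sequence is the length of a longest critical path: either the first stages
of the jobs up to some job followed by the second stages from that job on, or just all the second
stages. Reversing time turns the paths of the first kind into those of the dual sequence. So the two
completion times agree up to the path of the second kind, whose length is the sum of the second
stages for the sequence and the sum of the first stages for its dual. If the first stages are
nonnegative, the completion time of the dual is thus the maximum of the completion time of the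
sequence and the sum of its first stages. The latter does not depend on the ordering, so minimizing
the completion time of the sequence also minimizes that of the dual.
-/

theorem dualJob_involutive : Function.Involutive dualJob := fun _ => rfl

/-- The dual schedule `S^d` of a sequence `S`: the dual jobs in reverse order. -/
def dualSeq (L : List (ℝ × ℝ)) : List (ℝ × ℝ) := (L.map dualJob).reverse

theorem dualSeq_cons (j : ℝ × ℝ) (L : List (ℝ × ℝ)) :
    dualSeq (j :: L) = dualSeq L ++ [dualJob j] := by
  simp only [dualSeq, List.map_cons, List.reverse_cons]

theorem dualSeq_involutive : Function.Involutive dualSeq := fun L => by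
  simp only [dualSeq, List.map_reverse, List.reverse_reverse, List.map_map,
    dualJob_involutive.comp_self, List.map_id]

theorem dualSeq_perm_of_perm_map_dualJob {L L' : List (ℝ × ℝ)} (h : L'.Perm (L.map dualJob)) :
    (dualSeq L').Perm L :=
  calc
    (dualSeq L').Perm (L'.map dualJob) := List.reverse_perm _
    List.Perm _ ((L.map dualJob).map dualJob) := h.map dualJob
    _ = L := by rw [List.map_map, dualJob_involutive.comp_self, List.map_id]

theorem sum_map_fst_dualSeq (L : List (ℝ × ℝ)) :
    ((dualSeq L).map Prod.fst).sum = (L.map Prod.snd).sum := by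
  rw [dualSeq, List.map_reverse, List.sum_reverse, List.map_map]
  rfl

theorem fst_foldl_stepFS (s : ℝ × ℝ) (L : List (ℝ × ℝ)) :
    (L.foldl stepFS s).1 = s.1 + (L.map Prod.fst).sum := by
  induction L generalizing s with
  | nil => simp
  | cons j L ih => rw [List.foldl_cons, ih, List.map_cons, List.sum_cons, stepFS, add_assoc]

theorem fst_le_snd_stepFS (s : ℝ × ℝ) {j : ℝ × ℝ} (hj : 0 ≤ j.2) :
    (stepFS s j).1 ≤ (stepFS s j).2 :=
  le_add_of_le_of_nonneg (le_max_left _ _) hj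

theorem sum_map_fst_le_compFS {L : List (ℝ × ℝ)} (hL : ∀ j ∈ L, 0 ≤ j.2) :
    (L.map Prod.fst).sum ≤ compFS L := by
  have status_le : (statusFS L).1 ≤ (statusFS L).2 :=
    List.foldlRecOn L stepFS (motive := fun s => s.1 ≤ s.2) le_rfl
      fun s _ j hj => fst_le_snd_stepFS s (hL j hj)
  rwa [statusFS, fst_foldl_stepFS, zero_add] at status_le

-- Time reversal: the T-processor of the dual flowshop, initially busy until `β`, stands for the
-- R-processor of the original one staying busy for `β` after its last job.
theorem max_snd_foldl_stepFS_eq_max_dualSeq (ρ τ β : ℝ) (L : List (ℝ × ℝ)) :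
    max (L.foldl stepFS (ρ, τ)).2 (ρ + (L.map Prod.fst).sum + β) =
      max (ρ + ((dualSeq L).foldl stepFS (0, β)).2) (τ + (L.map Prod.snd).sum) := by
  induction L generalizing ρ τ with
  | nil => simp [dualSeq, max_comm]
  | cons j L ih =>
    obtain ⟨r, t⟩ := j
    set T := (L.map Prod.snd).sum
    set D := ((dualSeq L).foldl stepFS (0, β)).2
    have dual_cons : ((dualSeq ((r, t) :: L)).foldl stepFS (0, β)).2 = max (T + t) D + r := by
      rw [dualSeq_cons, List.foldl_concat, stepFS, fst_foldl_stepFS, sum_map_fst_dualSeq, zero_add]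
      rfl
    calc
      _ = max (L.foldl stepFS (ρ + r, max (ρ + r) τ + t)).2
            (ρ + r + (L.map Prod.fst).sum + β) := by
        rw [List.map_cons, List.sum_cons, ← add_assoc ρ]
        rfl
      _ = max (ρ + r + D) (max (ρ + r) τ + t + T) := ih _ _
      _ = max (ρ + (max (T + t) D + r)) (τ + (t + T)) := by grind
      _ = _ := by rw [dual_cons, List.map_cons, List.sum_cons]

theorem max_compFS_sum_eq_max_compFS_dualSeq_sum (L : List (ℝ × ℝ)) :
    max (compFS L) (L.map Prod.fst).sum = max (compFS (dualSeq L)) (L.map Prod.snd).sum := by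
  simpa only [compFS, statusFS, zero_add, add_zero] using
    max_snd_foldl_stepFS_eq_max_dualSeq 0 0 0 L

theorem compFS_dualSeq {L : List (ℝ × ℝ)} (hL : ∀ j ∈ L, 0 ≤ j.1) :
    compFS (dualSeq L) = max (compFS L) (L.map Prod.fst).sum := by
  have dual_nonneg : ∀ j ∈ dualSeq L, 0 ≤ j.2 := by
    simpa only [dualSeq, List.mem_reverse, List.forall_mem_map, dualJob] using hL
  have sum_le : (L.map Prod.snd).sum ≤ compFS (dualSeq L) :=
    sum_map_fst_dualSeq L ▸ sum_map_fst_le_compFS dual_nonneg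
  rw [max_compFS_sum_eq_max_compFS_dualSeq_sum, max_eq_left sum_le]

theorem stmt5_general (L : List (ℝ × ℝ)) (hL : ∀ j ∈ L, 0 ≤ j.1)
    (hopt : ∀ L' : List (ℝ × ℝ), L'.Perm L → compFS L ≤ compFS L') :
    ∀ L' : List (ℝ × ℝ), L'.Perm (L.map dualJob) →
      compFS ((L.map dualJob).reverse) ≤ compFS L' := by
  intro L' hL'
  have perm : (dualSeq L').Perm L := dualSeq_perm_of_perm_map_dualJob hL'
  have sum_eq : ((dualSeq L').map Prod.fst).sum = (L.map Prod.fst).sum :=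
    (perm.map Prod.fst).sum_eq
  calc
    compFS (dualSeq L) = max (compFS L) (L.map Prod.fst).sum := compFS_dualSeq hL
    _ ≤ max (compFS (dualSeq L')) (L.map Prod.fst).sum := max_le_max_right _ (hopt _ perm)
    _ = compFS (dualSeq (dualSeq L')) := by
      rw [compFS_dualSeq fun j hj => hL j (perm.subset hj), sum_eq]
    _ = compFS L' := by rw [dualSeq_involutive L']

/-- If a sequence `L` achieves the minimum completion time on a single two-stage flowshop
among all orderings of its job set, then the reversed dual sequence achieves the minimum
completion time among all orderings of the dual job set. -/
theorem stmt5 (L : List (ℝ × ℝ)) (hL : ∀ j ∈ L, 0 ≤ j.1 ∧ 0 ≤ j.2)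
    (hopt : ∀ L' : List (ℝ × ℝ), L'.Perm L → compFS L ≤ compFS L') :
    ∀ L' : List (ℝ × ℝ), L'.Perm (L.map dualJob) →
      compFS ((L.map dualJob).reverse) ≤ compFS L' :=
  stmt5_general L (fun j hj => (hL j hj).1) hopt
end

section
/- Let G = {J_1,...,J_n} be a finite set of two-stage jobs and G^d its dual job set. For every m ≥ 1, the minimum makespan over all schedules of G on m identical two-stage flowshops equals the minimum makespan over all schedules of G^d on m identical two-stage flowshops. Moreover, if a schedule S is optimal for G, then replacing the job sequence assigned to each flowshop by its reversed dual sequence (of the corresponding dual jobs) yields an optimal schedule for G^d with the same makespan. -/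
/-- A schedule of a job set (given as a list `L`) on `m` two-stage flowshops: an assignment
`S` of a job sequence to each flowshop such that, all together, exactly the jobs of `L`
are processed. -/
def IsSchedule (m : ℕ) (L : List (ℝ × ℝ)) (S : Fin m → List (ℝ × ℝ)) : Prop :=
  (List.ofFn S).flatten.Perm L

/-- The makespan of a schedule on `m ≥ 1` flowshops: the maximum over the `m` flowshops of
the completion time of the job sequence assigned to that flowshop. -/
noncomputable def makespan {m : ℕ} (hm : 0 < m) (S : Fin m → List (ℝ × ℝ)) : ℝ :=
  Finset.univ.sup' ⟨⟨0, hm⟩, Finset.mem_univ _⟩ fun h => compFS (S h)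

/-! Cut a run of a flowshop between two consecutive jobs, and process the later jobs backwards,
as dual jobs. If the forward part ends in status `(ρ, τ)` and the backward part in status
`(ρ', τ')`, the whole run takes time `max (ρ + τ') (τ + ρ')`. Moving the cut past a job does not
change this quantity. With the cut at the end it is the completion time of the sequence, with the
cut at the beginning that of the reversed dual, because nonnegative times give `ρ ≤ τ`. -/

/-- The reversed dual `⟨(t_k, r_k), ..., (t_1, r_1)⟩` of a job sequence
`⟨(r_1, t_1), ..., (r_k, t_k)⟩`. -/
def revDual (L : List (ℝ × ℝ)) : List (ℝ × ℝ) := (L.map dualJob).reverse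

theorem revDual_involutive : Function.Involutive revDual := fun L => by
  simp only [revDual, List.map_reverse, List.reverse_reverse, List.map_map,
    dualJob_involutive.comp_self, List.map_id]

theorem mem_revDual {j : ℝ × ℝ} {L : List (ℝ × ℝ)} : j ∈ revDual L ↔ dualJob j ∈ L := by
  rw [revDual, List.mem_reverse, List.mem_map_of_involutive dualJob_involutive]

/-- The total time of a run cut in two, where `s` is the status at the cut and `s'` is the status
at the cut of the remaining jobs run backwards. In `s'` the two processors exchange roles, so
that its first component belongs to the T-processor. -/
def joinTime (s s' : ℝ × ℝ) : ℝ := max (s.1 + s'.2) (s.2 + s'.1)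

theorem joinTime_comm (s s' : ℝ × ℝ) : joinTime s s' = joinTime s' s := by
  rw [joinTime, joinTime, max_comm, add_comm s.1, add_comm s.2]

theorem joinTime_zero_right (s : ℝ × ℝ) : joinTime s (0, 0) = max s.1 s.2 := by
  simp only [joinTime, add_zero]

theorem joinTime_stepFS (s s' j : ℝ × ℝ) :
    joinTime (stepFS s j) s' = joinTime s (stepFS s' (dualJob j)) := by
  rcases s with ⟨a, b⟩
  rcases s' with ⟨a', b'⟩
  rcases j with ⟨r, t⟩
  -- Both sides are the longest of three routes, according to whether the change of processor
  -- happens after the job, at the job, or before it.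
  calc
    max (a + r + b') (max (a + r) b + t + a') =
        max (a + r + b') (max (a + r + t + a') (b + t + a')) := by
      rw [max_add, max_add]
    _ = max (a + (max (a' + t) b' + r)) (b + (a' + t)) := by
      rw [max_add, add_max, ← max_assoc, max_comm (a + r + b')]
      ring_nf

theorem joinTime_foldl_stepFS (L : List (ℝ × ℝ)) (s s' : ℝ × ℝ) :
    joinTime (L.foldl stepFS s) s' = joinTime s ((revDual L).foldl stepFS s') := by
  induction L generalizing s with
  | nil => rfl
  | cons j L ih =>
    simp only [revDual, List.map_cons, List.reverse_cons, List.foldl_append, List.foldl_cons,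
      List.foldl_nil] at ih ⊢
    rw [ih, joinTime_stepFS]

theorem statusFS_fst_le_snd {L : List (ℝ × ℝ)} (hL : ∀ j ∈ L, 0 ≤ j.2) :
    (statusFS L).1 ≤ (statusFS L).2 := by
  rcases L.eq_nil_or_concat' with rfl | ⟨L, j, rfl⟩
  · exact le_rfl
  · have hj : 0 ≤ j.2 := hL j (by simp)
    simp only [statusFS, List.foldl_append, List.foldl_cons, List.foldl_nil]
    exact (le_max_left _ _).trans (le_add_of_nonneg_right hj)

theorem compFS_eq_joinTime {L : List (ℝ × ℝ)} (hL : ∀ j ∈ L, 0 ≤ j.2) :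
    compFS L = joinTime (statusFS L) (0, 0) := by
  rw [joinTime_zero_right, max_eq_right (statusFS_fst_le_snd hL), compFS]

theorem compFS_revDual {L : List (ℝ × ℝ)} (hL : ∀ j ∈ L, 0 ≤ j.1 ∧ 0 ≤ j.2) :
    compFS (revDual L) = compFS L :=
  calc
    compFS (revDual L) = joinTime (statusFS (revDual L)) (0, 0) :=
      compFS_eq_joinTime fun j hj => (hL (dualJob j) (mem_revDual.1 hj)).1
    _ = joinTime (0, 0) (statusFS (revDual L)) := joinTime_comm _ _
    _ = joinTime (statusFS L) (0, 0) := (joinTime_foldl_stepFS L _ _).symm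
    _ = compFS L := (compFS_eq_joinTime fun j hj => (hL j hj).2).symm

/-- The schedule for the dual jobs in which each flowshop processes the reversed dual of the
sequence assigned to it by `S`. -/
def dualSchedule {m : ℕ} (S : Fin m → List (ℝ × ℝ)) : Fin m → List (ℝ × ℝ) :=
  fun h => revDual (S h)

section Schedules

variable {m : ℕ} {L : List (ℝ × ℝ)} {S : Fin m → List (ℝ × ℝ)}

theorem dualSchedule_involutive :
    Function.Involutive (dualSchedule : (Fin m → List (ℝ × ℝ)) → Fin m → List (ℝ × ℝ)) :=
  fun S => funext fun h => revDual_involutive (S h)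

theorem IsSchedule.mem_of_mem (hS : IsSchedule m L S) {h : Fin m} {j : ℝ × ℝ} (hj : j ∈ S h) :
    j ∈ L :=
  hS.subset (List.mem_flatten_of_mem (List.mem_ofFn.2 ⟨h, rfl⟩) hj)

theorem flatten_ofFn_dualSchedule_perm (S : Fin m → List (ℝ × ℝ)) :
    (List.ofFn (dualSchedule S)).flatten.Perm ((List.ofFn S).flatten.map dualJob) := by
  have hofFn : List.ofFn (dualSchedule S) = (List.ofFn S).map revDual := List.map_ofFn.symm
  rw [hofFn, ← List.flatMap_def, List.map_flatten, ← List.flatMap_def]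
  exact List.Perm.flatMap_left _ fun K _ => List.reverse_perm (K.map dualJob)

theorem isSchedule_dualSchedule_iff :
    IsSchedule m (L.map dualJob) (dualSchedule S) ↔ IsSchedule m L S := by
  rw [IsSchedule, IsSchedule, (flatten_ofFn_dualSchedule_perm S).congr_left,
    List.map_perm_map_iff dualJob_involutive.injective]

theorem makespan_dualSchedule (hm : 0 < m) (hS : ∀ h, ∀ j ∈ S h, 0 ≤ j.1 ∧ 0 ≤ j.2) :
    makespan hm (dualSchedule S) = makespan hm S :=
  Finset.sup'_congr _ rfl fun h _ => compFS_revDual (hS h)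

end Schedules

/-- On `m` identical two-stage flowshops, the minimum makespan over all schedules of a job
set equals the minimum makespan over all schedules of the dual job set. Moreover, if a
schedule `S` is optimal for the job set, then replacing the job sequence on each flowshop
by the reversed sequence of the corresponding dual jobs yields an optimal schedule for the
dual job set with the same makespan. -/
theorem stmt7 (m : ℕ) (hm : 0 < m) (L : List (ℝ × ℝ)) (hL : ∀ j ∈ L, 0 ≤ j.1 ∧ 0 ≤ j.2) :
    sInf {c : ℝ | ∃ S : Fin m → List (ℝ × ℝ), IsSchedule m L S ∧ makespan hm S = c} =
      sInf {c : ℝ | ∃ S : Fin m → List (ℝ × ℝ),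
        IsSchedule m (L.map dualJob) S ∧ makespan hm S = c} ∧
    ∀ S : Fin m → List (ℝ × ℝ), IsSchedule m L S →
      (∀ S' : Fin m → List (ℝ × ℝ), IsSchedule m L S' → makespan hm S ≤ makespan hm S') →
      IsSchedule m (L.map dualJob) (fun h => ((S h).map dualJob).reverse) ∧
      makespan hm (fun h => ((S h).map dualJob).reverse) = makespan hm S ∧
      ∀ S' : Fin m → List (ℝ × ℝ), IsSchedule m (L.map dualJob) S' →
        makespan hm (fun h => ((S h).map dualJob).reverse) ≤ makespan hm S' := by
  have hmakespan : ∀ S : Fin m → List (ℝ × ℝ), IsSchedule m L S →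
      makespan hm (dualSchedule S) = makespan hm S := fun S hS =>
    makespan_dualSchedule hm fun _ j hj => hL j (hS.mem_of_mem hj)
  refine ⟨congrArg sInf (Set.ext fun c => ?_), fun S hS hopt =>
    ⟨isSchedule_dualSchedule_iff.2 hS, hmakespan S hS,
      dualSchedule_involutive.surjective.forall.2 fun S' hS' => ?_⟩⟩
  · refine (dualSchedule_involutive.surjective.exists.trans (exists_congr fun S => ?_)).symm
    rw [isSchedule_dualSchedule_iff]
    exact and_congr_right fun hS => by rw [hmakespan S hS]
  · have hS'L : IsSchedule m L S' := isSchedule_dualSchedule_iff.1 hS'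
    calc
      makespan hm (dualSchedule S) = makespan hm S := hmakespan S hS
      _ ≤ makespan hm S' := hopt S' hS'L
      _ = makespan hm (dualSchedule S') := (hmakespan S' hS'L).symm
end

section
/- Let S_k = ⟨J_1,...,J_k⟩ be a sequence of two-stage jobs on a single two-stage flowshop, where J_i = (r_i,t_i) with r_i,t_i ≥ 0, and let S_k' = ⟨J_1',...,J_k'⟩ be obtained by replacing each job J_i = (r_i,t_i) with J_i' = (r_i + 1, t_i + 1). Then the completion time of S_k' is at most the completion time of S_k plus k + 1: C(S_k') ≤ C(S_k) + k + 1. -/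
/-! The completion time is subadditive under job-by-job addition of sequences, because a single
step of the flowshop is monotone in the status and jointly subadditive in the status and the job.
Enlarging every job by `(a, b)` adds the sequence of `k` copies of `(a, b)`, which by itself
completes at time at most `k * max a b + min a b`: the slower stage is the bottleneck. -/

theorem stepFS_mono_left {s s' : ℝ × ℝ} (h : s ≤ s') (j : ℝ × ℝ) : stepFS s j ≤ stepFS s' j := by
  obtain ⟨h₁, h₂⟩ := h
  simp only [stepFS, Prod.mk_le_mk]
  constructor <;> gcongr

theorem stepFS_add_le (s s' j j' : ℝ × ℝ) :
    stepFS (s + s') (j + j') ≤ stepFS s j + stepFS s' j' := by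
  simp only [stepFS, Prod.fst_add, Prod.snd_add, Prod.mk_add_mk, Prod.mk_le_mk,
    add_add_add_comm _ _ j.1, add_add_add_comm _ j.2, le_refl, true_and]
  gcongr
  exact max_add_add_le_max_add_max

theorem statusFS_append_singleton (L : List (ℝ × ℝ)) (j : ℝ × ℝ) :
    statusFS (L ++ [j]) = stepFS (statusFS L) j :=
  List.foldl_concat ..

theorem statusFS_map_add_le {ι : Type*} (f g : ι → ℝ × ℝ) (l : List ι) :
    statusFS (l.map (f + g)) ≤ statusFS (l.map f) + statusFS (l.map g) := by
  induction l using List.reverseRecOn with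
  | nil => simp [statusFS]
  | append_singleton l i ih =>
    simp only [List.map_append, List.map_singleton, statusFS_append_singleton]
    exact (stepFS_mono_left ih _).trans (stepFS_add_le ..)

theorem compFS_map_add_le {ι : Type*} (f g : ι → ℝ × ℝ) (l : List ι) :
    compFS (l.map (f + g)) ≤ compFS (l.map f) + compFS (l.map g) :=
  (statusFS_map_add_le f g l).2

theorem statusFS_replicate_le {a b : ℝ} (ha : 0 ≤ a) (hb : 0 ≤ b) (n : ℕ) :
    statusFS (List.replicate n (a, b)) ≤ (n * a, n * max a b + min a b) := by
  induction n with
  | zero => simp [statusFS, Prod.le_def, ha, hb]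
  | succ n ih =>
    rw [List.replicate_succ', statusFS_append_singleton]
    refine (stepFS_mono_left ih _).trans ?_
    have starts_on_arrival : n * a + a + b ≤ (n + 1) * max a b + min a b :=
      calc n * a + a + b = n * a + (max a b + min a b) := by rw [max_add_min, add_assoc]
        _ ≤ n * max a b + (max a b + min a b) := by gcongr; exact le_max_left a b
        _ = (n + 1) * max a b + min a b := by ring
    have starts_after_waiting : n * max a b + min a b + b ≤ (n + 1) * max a b + min a b := by
      linarith [le_max_right a b]
    simp only [stepFS, Prod.mk_le_mk, Nat.cast_succ, ← max_add_add_right]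
    exact ⟨by rw [add_one_mul], max_le starts_on_arrival starts_after_waiting⟩

theorem compFS_replicate_le {a b : ℝ} (ha : 0 ≤ a) (hb : 0 ≤ b) (n : ℕ) :
    compFS (List.replicate n (a, b)) ≤ n * max a b + min a b :=
  (statusFS_replicate_le ha hb n).2

theorem stmt13_general (L : List (ℝ × ℝ)) {a b : ℝ} (ha : 0 ≤ a) (hb : 0 ≤ b) :
    compFS (L.map fun j => (j.1 + a, j.2 + b)) ≤ compFS L + L.length * max a b + min a b :=
  calc compFS (L.map fun j => (j.1 + a, j.2 + b))
      ≤ compFS (L.map id) + compFS (L.map fun _ => (a, b)) :=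
        compFS_map_add_le id (fun _ => (a, b)) L
    _ = compFS L + compFS (List.replicate L.length (a, b)) := by rw [List.map_id, List.map_const']
    _ ≤ compFS L + (L.length * max a b + min a b) := by gcongr; exact compFS_replicate_le ha hb _
    _ = compFS L + L.length * max a b + min a b := (add_assoc ..).symm

/-- If every job `(r_i, t_i)` in a sequence of `k` two-stage jobs is replaced by
`(r_i + 1, t_i + 1)`, then the completion time of the resulting sequence on a single
two-stage flowshop is at most the original completion time plus `k + 1`. -/
theorem stmt13 (L : List (ℝ × ℝ)) (hL : ∀ j ∈ L, 0 ≤ j.1 ∧ 0 ≤ j.2) :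
    compFS (L.map fun j => (j.1 + 1, j.2 + 1)) ≤ compFS L + (L.length : ℝ) + 1 := by
  simpa using stmt13_general L zero_le_one zero_le_one
end

section
/- Let m ≥ 2, let G = {J_1,...,J_n} with J_i = (r_i,t_i), r_i,t_i ≥ 0 real and not all zero, let ε > 0, let T_max = max{Σ_{i=1}^n r_i, Σ_{i=1}^n t_i}, and set K = ε·T_max/(nm). Define G' = {(⌊r_i/K⌋, ⌊t_i/K⌋) : 1 ≤ i ≤ n}. Let S' be a schedule of G' on m two-stage flowshops achieving the minimum makespan for G', given by a job index partition (P_1,...,P_m) with a job order on each part, and let S be the schedule of G using the same partition and orders. Then C_max(S) ≤ (1 + ε)·Opt(G), where Opt(G) is the minimum makespan of G on m flowshops. -/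
/-- A job index partition with a job order on each part: `P` assigns to each of the `m`
flowshops an ordered list of job indices, such that all together exactly the `n` job
indices `0, …, n − 1` occur. -/
def IsIdxSchedule (m n : ℕ) (P : Fin m → List ℕ) : Prop :=
  (List.ofFn P).flatten.Perm (List.range n)

/-- The makespan of an index schedule `P` on `m ≥ 1` flowshops for the jobs `f 0, f 1, …`:
the maximum over the flowshops of the completion time of the job sequence assigned to it. -/
noncomputable def idxMakespan {m : ℕ} (hm : 0 < m) (P : Fin m → List ℕ) (f : ℕ → ℝ × ℝ) : ℝ :=
  Finset.univ.sup' ⟨⟨0, hm⟩, Finset.mem_univ _⟩ fun h => compFS ((P h).map f)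

/-!
The scaled rounding `g = K⌊f / K⌋` satisfies `g ≤ f ≤ g + (K, K)`. A completion time is the largest
length of a path through the flowshop, made of the `r`-times up to some job and the `t`-times from
that job on. On `ℓ` jobs such a path has `ℓ + 1` operations, so rounding costs at most `(ℓ + 1)K`,
which is at most `nK ≤ ε · Opt(G)` unless one flowshop receives all `n` jobs. In that case, if every
single rounded job were shorter than the rounded completion time, the jobs could be distributed
over two flowshops that both finish earlier, contradicting optimality as `m ≥ 2`. So the rounded
length of one job `j` is the whole rounded completion time. Using the exact times of `j`, whose
length `r_j + t_j` is at most `Opt(G)`, leaves an error of at most `nK`.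
-/

section Flowshop

theorem statusFS_fst (L : List (ℝ × ℝ)) : (statusFS L).1 = L.sum.1 := by
  induction L using List.reverseRecOn with
  | nil => rfl
  | append_singleton L j ih => simpa [statusFS, stepFS] using ih

@[simp]
theorem compFS_nil : compFS [] = 0 := rfl

theorem compFS_concat (L : List (ℝ × ℝ)) (j : ℝ × ℝ) :
    compFS (L ++ [j]) = max (L.sum.1 + j.1) (compFS L) + j.2 := by
  simp only [compFS, ← statusFS_fst, statusFS, stepFS, List.foldl_append, List.foldl_cons,
    List.foldl_nil]

theorem compFS_singleton {j : ℝ × ℝ} (hj : 0 ≤ j.1) : compFS [j] = j.1 + j.2 := by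
  simpa [hj] using compFS_concat [] j

theorem compFS_map_smul {ι : Type*} {c : ℝ} (hc : 0 ≤ c) (f : ι → ℝ × ℝ) (L : List ι) :
    compFS (L.map fun i => c • f i) = c * compFS (L.map f) := by
  have hstep (s j : ℝ × ℝ) : stepFS (c • s) (c • j) = c • stepFS s j := by
    simp [stepFS, Prod.smul_def, mul_add, mul_max_of_nonneg, hc]
  have hstatus : statusFS (L.map fun i => c • f i) = c • statusFS (L.map f) := by
    simp only [statusFS, List.foldl_map]
    rw [← List.foldl_hom (c • ·) (g₂ := fun s i => stepFS s (c • f i)) fun s i => hstep s (f i)]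
    simp
  simp [compFS, hstatus]

theorem sum_snd_le_compFS (L : List (ℝ × ℝ)) : L.sum.2 ≤ compFS L := by
  induction L using List.reverseRecOn with
  | nil => simp
  | append_singleton L j ih =>
    simp only [compFS_concat, List.sum_append, List.sum_singleton, Prod.snd_add]
    gcongr
    exact le_max_of_le_right ih

theorem sum_fst_le_compFS {L : List (ℝ × ℝ)} (hL : ∀ j ∈ L, 0 ≤ j.2) : L.sum.1 ≤ compFS L := by
  induction L using List.reverseRecOn with
  | nil => simp
  | append_singleton L j _ =>
    simp only [compFS_concat, List.sum_append, List.sum_singleton, Prod.fst_add]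
    exact (le_max_left _ _).trans (le_add_of_nonneg_right (hL j (by simp)))

theorem compFS_append {A : List (ℝ × ℝ)} (hA : ∀ j ∈ A, 0 ≤ j.2) (B : List (ℝ × ℝ)) :
    compFS (A ++ B) = max (compFS A + B.sum.2) (A.sum.1 + compFS B) := by
  induction B using List.reverseRecOn with
  | nil => simp [sum_fst_le_compFS hA]
  | append_singleton B j ih =>
    rw [← List.append_assoc, compFS_concat, compFS_concat, ih]
    simp only [List.sum_append, List.sum_singleton, Prod.fst_add, Prod.snd_add,
      ← max_add_add_right, ← max_add_add_left, add_assoc]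
    exact max_left_comm _ _ _

theorem compFS_append_cons {A : List (ℝ × ℝ)} (hA : ∀ j ∈ A, 0 ≤ j.2) {j : ℝ × ℝ} (hj : 0 ≤ j)
    (B : List (ℝ × ℝ)) :
    compFS (A ++ j :: B) =
      max (compFS A + j.2 + B.sum.2)
        (max (A.sum.1 + (j.1 + j.2) + B.sum.2) (A.sum.1 + j.1 + compFS B)) := by
  have hj' : ∀ i ∈ [j], 0 ≤ i.2 := by simpa using hj.2
  rw [compFS_append hA, ← List.singleton_append, compFS_append hj', compFS_singleton hj.1]
  simp only [List.sum_append, List.sum_singleton, Prod.snd_add, ← max_add_add_left, add_assoc]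

theorem compFS_append_lt_compFS_append_cons {A : List (ℝ × ℝ)} (hA : ∀ j ∈ A, 0 ≤ j.2)
    {j : ℝ × ℝ} (hj₁ : 0 < j.1) (hj₂ : 0 < j.2) (B : List (ℝ × ℝ)) :
    compFS (A ++ B) < compFS (A ++ j :: B) := by
  rw [compFS_append hA, compFS_append_cons hA ⟨hj₁.le, hj₂.le⟩]
  refine max_lt (lt_max_of_lt_left ?_) (lt_max_of_lt_right (lt_max_of_lt_right ?_)) <;> linarith

theorem add_le_compFS_of_mem {L : List (ℝ × ℝ)} (hL : ∀ j ∈ L, 0 ≤ j) {j : ℝ × ℝ} (hj : j ∈ L) :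
    j.1 + j.2 ≤ compFS L := by
  obtain ⟨A, B, rfl⟩ := List.append_of_mem hj
  rw [compFS_append_cons (fun i hi => (hL i (by simp [hi])).2) (hL j hj)]
  have hA : 0 ≤ A.sum.1 := (List.sum_nonneg fun i hi => hL i (by simp [hi])).1
  have hB : 0 ≤ B.sum.2 := (List.sum_nonneg fun i hi => hL i (by simp [hi])).2
  exact le_max_of_le_right (le_max_of_le_left (by linarith))

theorem compFS_le_sum {L : List (ℝ × ℝ)} (hL : ∀ j ∈ L, 0 ≤ j) :
    compFS L ≤ L.sum.1 + L.sum.2 := by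
  induction L using List.reverseRecOn with
  | nil => simp
  | append_singleton L j ih =>
    have hLj := ih fun i hi => hL i (by simp [hi])
    have hj : 0 ≤ j.1 := (hL j (by simp)).1
    have hsum : 0 ≤ L.sum.2 := (List.sum_nonneg fun i hi => hL i (by simp [hi])).2
    rw [compFS_concat, List.sum_append, List.sum_singleton, Prod.fst_add, Prod.snd_add, ← add_assoc]
    gcongr
    exact max_le (by linarith) (by linarith)

end Flowshop

section Perturbation

variable {ι : Type*} {f g : ι → ℝ × ℝ} {e : ℝ} {L : List ι}

theorem sum_map_le_sum_map_add_length (hfg : ∀ i ∈ L, f i ≤ g i + (e, e)) :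
    (L.map f).sum ≤ (L.map g).sum + (L.length * e, L.length * e) := by
  have h := List.sum_le_sum hfg
  simpa [List.sum_map_add, Prod.smul_def] using h

theorem compFS_map_le_add (he : 0 ≤ e) (hfg : ∀ i ∈ L, f i ≤ g i + (e, e)) :
    compFS (L.map f) ≤ compFS (L.map g) + (L.length + 1) * e := by
  induction L using List.reverseRecOn with
  | nil => simpa using he
  | append_singleton L j ih =>
    have hL : ∀ i ∈ L, f i ≤ g i + (e, e) := fun i hi => hfg i (by simp [hi])
    have hsum : (L.map f).sum.1 ≤ (L.map g).sum.1 + L.length * e :=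
      (sum_map_le_sum_map_add_length hL).1
    have hj₁ : (f j).1 ≤ (g j).1 + e := (hfg j (by simp)).1
    have hj₂ : (f j).2 ≤ (g j).2 + e := (hfg j (by simp)).2
    have hmax : max ((L.map f).sum.1 + (f j).1) (compFS (L.map f)) ≤
        max ((L.map g).sum.1 + (g j).1) (compFS (L.map g)) + (L.length + 1) * e := by
      rw [← max_add_add_right]
      exact max_le_max (by linarith) (ih hL)
    simp only [List.map_append, List.map_cons, List.map_nil, compFS_concat, List.length_append,
      List.length_singleton]
    push_cast
    linarith

theorem compFS_map_mono (hfg : ∀ i ∈ L, f i ≤ g i) : compFS (L.map f) ≤ compFS (L.map g) := by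
  simpa using compFS_map_le_add le_rfl fun i hi => (hfg i hi).trans_eq (add_zero (g i)).symm

/- Each critical path through `L` consists of `L.length + 1` operations and meets `j`. Taking the
operations of `j` exactly leaves at most `L.length` rounding errors. -/
theorem compFS_map_le_of_compFS_map_le_job (he : 0 ≤ e) (hg : ∀ i ∈ L, 0 ≤ g i)
    (hgf : ∀ i ∈ L, g i ≤ f i) (hfg : ∀ i ∈ L, f i ≤ g i + (e, e)) {j : ι} (hj : j ∈ L)
    (hdom : compFS (L.map g) ≤ (g j).1 + (g j).2) :
    compFS (L.map f) ≤ (f j).1 + (f j).2 + L.length * e := by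
  obtain ⟨A, B, rfl⟩ := List.append_of_mem hj
  have hgA : ∀ x ∈ A.map g, 0 ≤ x.2 := List.forall_mem_map.2 fun i hi => (hg i (by simp [hi])).2
  have hfA : ∀ x ∈ A.map f, 0 ≤ x.2 := List.forall_mem_map.2 fun i hi =>
    (hg i (by simp [hi])).2.trans (hgf i (by simp [hi])).2
  have hfgA : ∀ i ∈ A, f i ≤ g i + (e, e) := fun i hi => hfg i (by simp [hi])
  have hfgB : ∀ i ∈ B, f i ≤ g i + (e, e) := fun i hi => hfg i (by simp [hi])
  have hsumA : (A.map f).sum.1 ≤ (A.map g).sum.1 + A.length * e :=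
    (sum_map_le_sum_map_add_length hfgA).1
  have hsumB : (B.map f).sum.2 ≤ (B.map g).sum.2 + B.length * e :=
    (sum_map_le_sum_map_add_length hfgB).2
  have hcompA := compFS_map_le_add he hfgA
  have hcompB := compFS_map_le_add he hfgB
  obtain ⟨hj₁, hj₂⟩ := hgf j hj
  rw [List.map_append, List.map_cons, compFS_append_cons hgA (hg j hj), max_le_iff,
    max_le_iff] at hdom
  obtain ⟨hbefore, hat, hafter⟩ := hdom
  rw [List.map_append, List.map_cons, compFS_append_cons hfA ((hg j hj).trans (hgf j hj))]
  push_cast [List.length_append, List.length_cons]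
  refine max_le ?_ (max_le ?_ ?_) <;> linarith

end Perturbation

section Splitting

open scoped List

variable {ι : Type*}

theorem exists_append_perm_sum_lt {w : ι → ℝ} {c : ℝ} (hc : 0 < c) {L : List ι}
    (hw : ∀ i ∈ L, w i < c) (hL : (L.map w).sum ≤ c) :
    ∃ A B : List ι, A ++ B ~ L ∧ (A.map w).sum < c ∧ (B.map w).sum < c := by
  classical
  obtain hlt | heq := hL.lt_or_eq
  · exact ⟨L, [], by simp, hlt, by simpa using hc⟩
  · obtain ⟨b, hb, hwb⟩ : ∃ b ∈ L, 0 < w b :=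
      List.exists_lt_of_sum_lt (fun _ => 0) w (by simpa [heq] using hc)
    have hperm := List.perm_cons_erase hb
    have hsum : w b + ((L.erase b).map w).sum = c := by
      rw [← heq, (hperm.map w).sum_eq, List.map_cons, List.sum_cons]
    exact ⟨[b], L.erase b, hperm.symm, by simpa using hw b hb, by linarith⟩

theorem sum_map_fst (g : ι → ℝ × ℝ) (L : List ι) :
    (L.map g).sum.1 = (L.map fun i => (g i).1).sum := by
  rw [← AddMonoidHom.coe_fst, map_list_sum, List.map_map]
  rfl

theorem sum_map_snd (g : ι → ℝ × ℝ) (L : List ι) :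
    (L.map g).sum.2 = (L.map fun i => (g i).2).sum := by
  rw [← AddMonoidHom.coe_snd, map_list_sum, List.map_map]
  rfl

theorem compFS_map_append_le_max {g : ι → ℝ × ℝ} {Z N : List ι}
    (hZ : ∀ i ∈ Z, 0 ≤ g i ∧ (g i).1 = 0) (hN : ∀ i ∈ N, 0 ≤ g i ∧ (g i).2 = 0) :
    compFS ((Z ++ N).map g) ≤ max (Z.map g).sum.2 (N.map g).sum.1 := by
  have hZsum : (Z.map g).sum.1 = 0 := by
    rw [sum_map_fst, List.map_congr_left fun i hi => (hZ i hi).2]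
    simp
  have hNsum : (N.map g).sum.2 = 0 := by
    rw [sum_map_snd, List.map_congr_left fun i hi => (hN i hi).2]
    simp
  have hZcomp := compFS_le_sum (List.forall_mem_map.2 fun i hi => (hZ i hi).1)
  have hNcomp := compFS_le_sum (List.forall_mem_map.2 fun i hi => (hN i hi).1)
  rw [List.map_append, compFS_append (List.forall_mem_map.2 fun i hi => (hZ i hi).1.2)]
  exact max_le_max (by linarith) (by linarith)

theorem exists_perm_append_compFS_lt {g : ι → ℝ × ℝ} {c : ℝ} (hc : 0 < c) {Z N : List ι}
    (hZ : ∀ i ∈ Z, 0 ≤ g i ∧ (g i).1 = 0) (hN : ∀ i ∈ N, 0 ≤ g i ∧ (g i).2 = 0)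
    (hZlt : ∀ i ∈ Z, (g i).2 < c) (hNlt : ∀ i ∈ N, (g i).1 < c)
    (hZsum : (Z.map g).sum.2 ≤ c) (hNsum : (N.map g).sum.1 ≤ c) :
    ∃ A B : List ι, A ++ B ~ Z ++ N ∧ compFS (A.map g) < c ∧ compFS (B.map g) < c := by
  rw [sum_map_snd] at hZsum
  rw [sum_map_fst] at hNsum
  obtain ⟨Z₁, Z₂, hZperm, hZ₁, hZ₂⟩ := exists_append_perm_sum_lt hc hZlt hZsum
  obtain ⟨N₁, N₂, hNperm, hN₁, hN₂⟩ := exists_append_perm_sum_lt hc hNlt hNsum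
  obtain ⟨hZ₁sub, hZ₂sub⟩ := List.append_subset.1 hZperm.subset
  obtain ⟨hN₁sub, hN₂sub⟩ := List.append_subset.1 hNperm.subset
  rw [← sum_map_snd] at hZ₁ hZ₂
  rw [← sum_map_fst] at hN₁ hN₂
  refine ⟨Z₁ ++ N₁, Z₂ ++ N₂, ?_, ?_, ?_⟩
  · calc
      (Z₁ ++ N₁) ++ (Z₂ ++ N₂) ~ (Z₁ ++ Z₂) ++ (N₁ ++ N₂) := by
        classical
        exact List.perm_iff_count.2 fun i => by simp only [List.count_append, add_add_add_comm]
      _ ~ Z ++ N := hZperm.append hNperm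
  · exact (compFS_map_append_le_max (fun i hi => hZ i (hZ₁sub hi))
      fun i hi => hN i (hN₁sub hi)).trans_lt (max_lt hZ₁ hN₁)
  · exact (compFS_map_append_le_max (fun i hi => hZ i (hZ₂sub hi))
      fun i hi => hN i (hN₂sub hi)).trans_lt (max_lt hZ₂ hN₂)

theorem exists_append_perm_compFS_lt_of_fst_or_snd_eq_zero {g : ι → ℝ × ℝ} {c : ℝ} (hc : 0 < c)
    {L : List ι} (hg : ∀ i ∈ L, 0 ≤ g i) (hzero : ∀ i ∈ L, (g i).1 = 0 ∨ (g i).2 = 0)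
    (hlt : ∀ i ∈ L, (g i).1 + (g i).2 < c) (hfst : (L.map g).sum.1 ≤ c)
    (hsnd : (L.map g).sum.2 ≤ c) :
    ∃ A B : List ι, A ++ B ~ L ∧ compFS (A.map g) < c ∧ compFS (B.map g) < c := by
  classical
  let Z := L.filter fun i => (g i).1 = 0
  let N := L.filter fun i => !decide ((g i).1 = 0)
  have hZ : ∀ i ∈ Z, i ∈ L ∧ (g i).1 = 0 := fun i hi => by simpa [Z] using hi
  have hN : ∀ i ∈ N, i ∈ L ∧ (g i).2 = 0 := fun i hi => by
    obtain ⟨hiL, hi₁⟩ : i ∈ L ∧ (g i).1 ≠ 0 := by simpa [N] using hi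
    exact ⟨hiL, (hzero i hiL).resolve_left hi₁⟩
  have hg' : ∀ x ∈ L.map g, 0 ≤ x := List.forall_mem_map.2 hg
  obtain ⟨A, B, hAB, hA, hB⟩ := exists_perm_append_compFS_lt hc
    (fun i hi => ⟨hg i (hZ i hi).1, (hZ i hi).2⟩) (fun i hi => ⟨hg i (hN i hi).1, (hN i hi).2⟩)
    (fun i hi => by simpa [(hZ i hi).2] using hlt i (hZ i hi).1)
    (fun i hi => by simpa [(hN i hi).2] using hlt i (hN i hi).1)
    (((List.filter_sublist.map g).sum_le_sum hg').2.trans hsnd)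
    (((List.filter_sublist.map g).sum_le_sum hg').1.trans hfst)
  exact ⟨A, B, hAB.trans (List.filter_append_perm _ L), hA, hB⟩

theorem exists_append_perm_compFS_lt {g : ι → ℝ × ℝ} {L : List ι} (hL : L ≠ [])
    (hg : ∀ i ∈ L, 0 ≤ g i) (hlt : ∀ i ∈ L, (g i).1 + (g i).2 < compFS (L.map g)) :
    ∃ A B : List ι, A ++ B ~ L ∧
      compFS (A.map g) < compFS (L.map g) ∧ compFS (B.map g) < compFS (L.map g) := by
  by_cases hzero : ∀ i ∈ L, (g i).1 = 0 ∨ (g i).2 = 0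
  · obtain ⟨i, hi⟩ := List.exists_mem_of_ne_nil L hL
    have hpos : 0 < compFS (L.map g) :=
      (add_nonneg (hg i hi).1 (hg i hi).2).trans_lt (hlt i hi)
    have hg₂ : ∀ x ∈ L.map g, 0 ≤ x.2 := List.forall_mem_map.2 fun i hi => (hg i hi).2
    exact exists_append_perm_compFS_lt_of_fst_or_snd_eq_zero hpos hg hzero hlt
      (sum_fst_le_compFS hg₂) (sum_snd_le_compFS _)
  · push Not at hzero
    obtain ⟨j, hj, hj₁, hj₂⟩ := hzero
    have hsingle : compFS ([j].map g) < compFS (L.map g) := by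
      simpa [compFS_singleton (hg j hj).1] using hlt j hj
    obtain ⟨A, B, rfl⟩ := List.append_of_mem hj
    refine ⟨[j], A ++ B, (List.perm_middle (l₁ := A)).symm, hsingle, ?_⟩
    simp only [List.map_append, List.map_cons]
    exact compFS_append_lt_compFS_append_cons
      (List.forall_mem_map.2 fun i hi => (hg i (by simp [hi])).2)
      ((hg j hj).1.lt_of_ne' hj₁) ((hg j hj).2.lt_of_ne' hj₂) _

end Splitting

section Schedule

variable {m n : ℕ} {P : Fin m → List ℕ}

theorem IsIdxSchedule.lt_of_mem (hP : IsIdxSchedule m n P) {k : Fin m} {i : ℕ} (hi : i ∈ P k) :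
    i < n :=
  List.mem_range.1 <| hP.subset <| List.mem_flatten_of_mem (List.mem_ofFn.2 ⟨k, rfl⟩) hi

theorem IsIdxSchedule.exists_mem (hP : IsIdxSchedule m n P) {i : ℕ} (hi : i < n) :
    ∃ k, i ∈ P k := by
  simpa using hP.symm.subset (List.mem_range.2 hi)

theorem IsIdxSchedule.perm_range_of_le_length (hP : IsIdxSchedule m n P) {k : Fin m}
    (hk : n ≤ (P k).length) : (P k).Perm (List.range n) := by
  have hsub : (P k).Sublist (List.ofFn P).flatten :=
    List.sublist_flatten_of_mem (List.mem_ofFn.2 ⟨k, rfl⟩)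
  exact (hsub.subperm.trans hP.subperm).perm_of_length_le (by simpa using hk)

theorem IsIdxSchedule.sum_range_eq {M : Type*} [AddCommMonoid M] (hP : IsIdxSchedule m n P)
    (w : ℕ → M) : ∑ i ∈ Finset.range n, w i = ∑ k, ((P k).map w).sum := by
  calc
    ∑ i ∈ Finset.range n, w i = ((List.range n).map w).sum := rfl
    _ = ((List.ofFn P).flatten.map w).sum := (hP.map w).sum_eq.symm
    _ = ∑ k, ((P k).map w).sum := by
      rw [List.map_flatten, List.sum_flatten, List.map_map, List.map_ofFn, List.sum_ofFn]
      rfl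

theorem exists_isIdxSchedule_of_append_perm (hm : 2 ≤ m) {A B : List ℕ}
    (hAB : (A ++ B).Perm (List.range n)) :
    ∃ Q : Fin m → List ℕ, IsIdxSchedule m n Q ∧ ∀ k, Q k = A ∨ Q k = B ∨ Q k = [] := by
  obtain ⟨m, rfl⟩ := Nat.exists_eq_add_of_le' hm
  refine ⟨Fin.cons A (Fin.cons B fun _ => []), ?_, fun k => ?_⟩
  · simpa [IsIdxSchedule, List.ofFn_succ] using hAB
  · refine Fin.cases (Or.inl rfl) (fun k => ?_) k
    exact Fin.cases (Or.inr (Or.inl rfl)) (fun _ => Or.inr (Or.inr rfl)) k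

end Schedule

section Makespan

variable {m n : ℕ} {hm : 0 < m} {P : Fin m → List ℕ} {f g : ℕ → ℝ × ℝ}

theorem compFS_le_idxMakespan (k : Fin m) :
    compFS ((P k).map f) ≤ idxMakespan hm P f :=
  Finset.le_sup' (fun h => compFS ((P h).map f)) (Finset.mem_univ k)

theorem idxMakespan_le_iff {c : ℝ} :
    idxMakespan hm P f ≤ c ↔ ∀ k, compFS ((P k).map f) ≤ c :=
  (Finset.sup'_le_iff _ _).trans (by simp)

theorem idxMakespan_lt_iff {c : ℝ} :
    idxMakespan hm P f < c ↔ ∀ k, compFS ((P k).map f) < c :=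
  (Finset.sup'_lt_iff _).trans (by simp)

theorem idxMakespan_smul {c : ℝ} (hc : 0 ≤ c) :
    idxMakespan hm P (fun i => c • f i) = c * idxMakespan hm P f := by
  simp only [idxMakespan, compFS_map_smul hc]
  exact (Finset.mul₀_sup' hc _ _ _).symm

theorem IsIdxSchedule.map_nonneg (hP : IsIdxSchedule m n P) (hf : ∀ i < n, 0 ≤ f i) (k : Fin m) :
    ∀ j ∈ (P k).map f, 0 ≤ j :=
  List.forall_mem_map.2 fun i hi => hf i (hP.lt_of_mem hi)

theorem IsIdxSchedule.idxMakespan_mono (hP : IsIdxSchedule m n P) (hfg : ∀ i < n, f i ≤ g i) :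
    idxMakespan hm P f ≤ idxMakespan hm P g :=
  idxMakespan_le_iff.2 fun k =>
    (compFS_map_mono fun _ hi => hfg _ (hP.lt_of_mem hi)).trans (compFS_le_idxMakespan k)

theorem IsIdxSchedule.add_le_idxMakespan (hP : IsIdxSchedule m n P) (hf : ∀ i < n, 0 ≤ f i)
    {i : ℕ} (hi : i < n) : (f i).1 + (f i).2 ≤ idxMakespan hm P f := by
  obtain ⟨k, hk⟩ := hP.exists_mem hi
  exact (add_le_compFS_of_mem (hP.map_nonneg hf k) (List.mem_map_of_mem hk)).trans
    (compFS_le_idxMakespan k)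

theorem IsIdxSchedule.sum_range_le_mul_idxMakespan (hP : IsIdxSchedule m n P)
    (hf : ∀ i < n, 0 ≤ f i) :
    ∑ i ∈ Finset.range n, f i ≤ (m * idxMakespan hm P f, m * idxMakespan hm P f) := by
  have hle (k : Fin m) : ((P k).map f).sum ≤ (idxMakespan hm P f, idxMakespan hm P f) :=
    ⟨(sum_fst_le_compFS fun j hj => (hP.map_nonneg hf k j hj).2).trans
      (compFS_le_idxMakespan (hm := hm) k),
      (sum_snd_le_compFS _).trans (compFS_le_idxMakespan (hm := hm) k)⟩
  rw [hP.sum_range_eq f]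
  simpa [Prod.smul_def] using Finset.sum_le_card_nsmul Finset.univ _ _ fun k _ => hle k

end Makespan

section Optimal

variable {m n : ℕ} {hm : 0 < m} {P Q : Fin m → List ℕ} {f g : ℕ → ℝ × ℝ}

/-- `P` is a schedule of the jobs `f 0, …, f (n - 1)` on `m` flowshops of minimum makespan. -/
def IsOptSchedule (hm : 0 < m) (n : ℕ) (P : Fin m → List ℕ) (f : ℕ → ℝ × ℝ) : Prop :=
  IsIdxSchedule m n P ∧
    ∀ Q : Fin m → List ℕ, IsIdxSchedule m n Q → idxMakespan hm P f ≤ idxMakespan hm Q f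

theorem IsOptSchedule.smul (hP : IsOptSchedule hm n P f) {c : ℝ} (hc : 0 ≤ c) :
    IsOptSchedule hm n P fun i => c • f i := by
  refine ⟨hP.1, fun Q hQ => ?_⟩
  rw [idxMakespan_smul hc, idxMakespan_smul hc]
  exact mul_le_mul_of_nonneg_left (hP.2 Q hQ) hc

theorem IsOptSchedule.exists_compFS_le_job (hm₂ : 2 ≤ m) (hn : 0 < n)
    (hP : IsOptSchedule hm n P g) (hg : ∀ i < n, 0 ≤ g i) {k : Fin m}
    (hk : (P k).Perm (List.range n)) :
    ∃ j ∈ P k, compFS ((P k).map g) ≤ (g j).1 + (g j).2 := by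
  by_contra! hlt
  have hgk : ∀ i ∈ P k, 0 ≤ g i := fun i hi => hg i (hP.1.lt_of_mem hi)
  have hmem : 0 ∈ P k := hk.symm.subset (List.mem_range.2 hn)
  obtain ⟨A, B, hAB, hA, hB⟩ := exists_append_perm_compFS_lt (List.ne_nil_of_mem hmem) hgk hlt
  have hpos : 0 < compFS ((P k).map g) :=
    (add_nonneg (hg 0 hn).1 (hg 0 hn).2).trans_lt (hlt 0 hmem)
  obtain ⟨Q, hQ, hQk⟩ := exists_isIdxSchedule_of_append_perm hm₂ (hAB.trans hk)
  have hQlt : idxMakespan hm Q g < compFS ((P k).map g) := idxMakespan_lt_iff.2 fun l => by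
    obtain h | h | h := hQk l <;> rw [h]
    exacts [hA, hB, hpos]
  exact (hQlt.trans_le (compFS_le_idxMakespan k)).not_ge (hP.2 Q hQ)

theorem IsOptSchedule.idxMakespan_le_add (hm₂ : 2 ≤ m) (hn : 0 < n) {e : ℝ} (he : 0 ≤ e)
    (hP : IsOptSchedule hm n P g) (hg : ∀ i < n, 0 ≤ g i) (hgf : ∀ i < n, g i ≤ f i)
    (hfg : ∀ i < n, f i ≤ g i + (e, e)) (hQ : IsIdxSchedule m n Q) :
    idxMakespan hm P f ≤ idxMakespan hm Q f + n * e := by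
  have hPg : idxMakespan hm P g ≤ idxMakespan hm Q f := (hP.2 Q hQ).trans (hQ.idxMakespan_mono hgf)
  refine idxMakespan_le_iff.2 fun k => ?_
  have hlt : ∀ i ∈ P k, i < n := fun i hi => hP.1.lt_of_mem hi
  have hfgk : ∀ i ∈ P k, f i ≤ g i + (e, e) := fun i hi => hfg i (hlt i hi)
  obtain hk | hk := lt_or_ge (P k).length n
  · calc
      compFS ((P k).map f) ≤ compFS ((P k).map g) + ((P k).length + 1) * e :=
        compFS_map_le_add he hfgk
      _ ≤ idxMakespan hm Q f + n * e := by
        gcongr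
        · exact (compFS_le_idxMakespan k).trans hPg
        · exact_mod_cast hk
  · have hperm := hP.1.perm_range_of_le_length hk
    obtain ⟨j, hj, hdom⟩ := hP.exists_compFS_le_job hm₂ hn hg hperm
    calc
      compFS ((P k).map f) ≤ (f j).1 + (f j).2 + (P k).length * e :=
        compFS_map_le_of_compFS_map_le_job he (fun i hi => hg i (hlt i hi))
          (fun i hi => hgf i (hlt i hi)) hfgk hj hdom
      _ ≤ idxMakespan hm Q f + n * e := by
        rw [hperm.length_eq, List.length_range]
        gcongr
        exact hQ.add_le_idxMakespan (fun i hi => (hg i hi).trans (hgf i hi)) (hlt j hj)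

end Optimal

section Rounding

variable {K : ℝ} {j : ℝ × ℝ}

/-- The rounded job `(⌊r / K⌋, ⌊t / K⌋)` of a job `(r, t)`. -/
noncomputable def roundJob (K : ℝ) (j : ℝ × ℝ) : ℝ × ℝ := ((⌊j.1 / K⌋ : ℝ), (⌊j.2 / K⌋ : ℝ))

theorem roundJob_nonneg (hK : 0 ≤ K) (hj : 0 ≤ j) : 0 ≤ roundJob K j :=
  ⟨Int.cast_nonneg (Int.floor_nonneg.2 (div_nonneg hj.1 hK)),
    Int.cast_nonneg (Int.floor_nonneg.2 (div_nonneg hj.2 hK))⟩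

theorem smul_roundJob_le (hK : 0 < K) (j : ℝ × ℝ) : K • roundJob K j ≤ j := by
  have hle (x : ℝ) : K * ⌊x / K⌋ ≤ x := by linarith [Int.sub_floor_div_mul_nonneg x hK]
  exact ⟨hle j.1, hle j.2⟩

theorem le_smul_roundJob_add (hK : 0 < K) (j : ℝ × ℝ) : j ≤ K • roundJob K j + (K, K) := by
  have hle (x : ℝ) : x ≤ K * ⌊x / K⌋ + K := by linarith [Int.sub_floor_div_mul_lt x hK]
  exact ⟨hle j.1, hle j.2⟩

theorem IsOptSchedule.idxMakespan_le_add_of_roundJob {m n : ℕ} {hm : 0 < m} {P Q : Fin m → List ℕ}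
    {f : ℕ → ℝ × ℝ} (hm₂ : 2 ≤ m) (hn : 0 < n) (hK : 0 < K) (hf : ∀ i < n, 0 ≤ f i)
    (hP : IsOptSchedule hm n P fun i => roundJob K (f i)) (hQ : IsIdxSchedule m n Q) :
    idxMakespan hm P f ≤ idxMakespan hm Q f + n * K :=
  (hP.smul hK.le).idxMakespan_le_add hm₂ hn hK.le
    (fun i hi => smul_nonneg hK.le (roundJob_nonneg hK.le (hf i hi)))
    (fun i _ => smul_roundJob_le hK (f i)) (fun i _ => le_smul_roundJob_add hK (f i)) hQ

end Rounding

/-- Let `m ≥ 2`, let `G` consist of jobs `(r_i, t_i)`, `i < n`, with nonnegative times and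
not all zero, let `ε > 0`, let `T_max = max{Σ r_i, Σ t_i}` and `K = ε·T_max/(n·m)`, and let
`G'` consist of the rounded jobs `(⌊r_i/K⌋, ⌊t_i/K⌋)`. If `P` is a schedule (job index
partition together with a job order on each part) achieving the minimum makespan for `G'`
on `m` two-stage flowshops, then the schedule of `G` using the same partition and orders
has makespan at most `(1 + ε)·Opt(G)`, where `Opt(G)` is the minimum makespan of `G` on
`m` flowshops. -/
theorem stmt18 (m : ℕ) (hm : 2 ≤ m) (n : ℕ) (r t : ℕ → ℝ)
    (hr : ∀ i, i < n → 0 ≤ r i) (ht : ∀ i, i < n → 0 ≤ t i)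
    (ε : ℝ) (hε : 0 < ε)
    (Tmax : ℝ) (hTmax : Tmax = max (∑ i ∈ Finset.range n, r i) (∑ i ∈ Finset.range n, t i))
    (hTpos : 0 < Tmax)
    (K : ℝ) (hKdef : K = ε * Tmax / ((n : ℝ) * (m : ℝ)))
    (P : Fin m → List ℕ) (hP : IsIdxSchedule m n P)
    (hPopt : ∀ Q : Fin m → List ℕ, IsIdxSchedule m n Q →
      idxMakespan (by omega) P (fun i => ((⌊r i / K⌋ : ℝ), (⌊t i / K⌋ : ℝ))) ≤
        idxMakespan (by omega) Q (fun i => ((⌊r i / K⌋ : ℝ), (⌊t i / K⌋ : ℝ)))) :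
    idxMakespan (by omega : 0 < m) P (fun i => (r i, t i)) ≤
      (1 + ε) * sInf {c : ℝ | ∃ Q : Fin m → List ℕ, IsIdxSchedule m n Q ∧
        idxMakespan (by omega : 0 < m) Q (fun i => (r i, t i)) = c} := by
  have hm₀ : 0 < m := by omega
  have hn : 0 < n := Nat.pos_of_ne_zero fun hn => by simp [hTmax, hn] at hTpos
  have hK : 0 < K := by rw [hKdef]; positivity
  have hnonneg : ∀ i < n, (0 : ℝ × ℝ) ≤ (r i, t i) := fun i hi => ⟨hr i hi, ht i hi⟩
  have hOpt : IsOptSchedule hm₀ n P fun i => roundJob K (r i, t i) := ⟨hP, hPopt⟩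
  rw [← div_le_iff₀' (by positivity)]
  refine le_csInf ⟨_, P, hP, rfl⟩ ?_
  rintro _ ⟨Q, hQ, rfl⟩
  rw [div_le_iff₀' (by positivity)]
  set O := idxMakespan hm₀ Q fun i => (r i, t i)
  have hTmax_le : Tmax ≤ m * O := by
    obtain ⟨hrO, htO⟩ := hQ.sum_range_le_mul_idxMakespan (hm := hm₀) hnonneg
    rw [Prod.fst_sum] at hrO
    rw [Prod.snd_sum] at htO
    exact hTmax.trans_le (max_le hrO htO)
  have hnK : n * K ≤ ε * O := by
    have hnK_eq : n * K = ε * (Tmax / m) := by rw [hKdef]; field_simp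
    rw [hnK_eq]
    gcongr
    exact (div_le_iff₀' (by positivity)).2 hTmax_le
  linarith [hOpt.idxMakespan_le_add_of_roundJob hm hn hK hnonneg hQ]
end
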